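/- arXiv:2506.02320 — 6 statements merged into one kernel-verified Lean document; each statement's English description precedes it below -/
import Mathlib

section
/- Let M and P be N×N complex matrices with P² = P and P M = M P, and let g : ℝ → ℂᴺ be continuous. (i) If φ′, φ″ : ℝ → ℂᴺ are differentiable, satisfy dφ′/dx = P(Mφ′ + g) and dφ″/dx = (I−P)(Mφ″ + g) on ℝ, and at some point x₀ satisfy P φ′(x₀) = φ′(x₀) and P φ″(x₀) = 0, then φ = φ′ + φ″ satisfies dφ/dx = Mφ + g on ℝ. (ii) Conversely, if φ : ℝ → ℂᴺ is differentiable and satisfies dφ/dx = Mφ + g, then Pφ satisfies d(Pφ)/dx = P(M(Pφ) + g) and (I−P)φ satisfies d((I−P)φ)/dx = (I−P)(M((I−P)φ) + g). -/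
open Matrix

/-!
`I - P` annihilates the derivative of `φ′` and `P` that of `φ″`, so the initial conditions keep
`φ′` in the range of `P` and `φ″` in its kernel. As `M` preserves both subspaces,
`P M φ′ = M φ′` and `(I - P) M φ″ = M φ″`, while `P g + (I - P) g = g`: the two one-way equations
add up to the global one. The converse holds because `P M = P M P`, and likewise for `I - P`.
-/

section OneWayProjection

section Algebra

variable {R E : Type*} [Ring R] [AddCommGroup E] [Module R E] [TopologicalSpace E]
  [IsTopologicalAddGroup E] {P : E →L[R] E} {A : E →ₗ[R] E}

theorem commute_one_sub_of_commute (hPA : Function.Commute P A) :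
    Function.Commute (1 - P : E →L[R] E) A := fun v => by
  simp [hPA v]

theorem map_add_one_sub_map_of_commute (hPA : Function.Commute P A) {u v : E}
    (hu : P u = u) (hv : P v = 0) (c : E) :
    P (A u + c) + (1 - P) (A v + c) = A (u + v) + c := by
  have hAu : P (A u) = A u := by rw [hPA u, hu]
  have hAv : P (A v) = 0 := by rw [hPA v, hv, map_zero]
  simp only [_root_.sub_apply, one_apply_eq_self, map_add, hAu, hAv]
  abel

end Algebra

variable {𝕜 E F : Type*} [RCLike 𝕜] [NormedAddCommGroup E] [NormedSpace 𝕜 E]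
  [NormedAddCommGroup F] [NormedSpace 𝕜 F]

theorem map_eq_map_of_hasDerivAt_of_map_eq_zero (Q : E →L[𝕜] F) {f f' : 𝕜 → E}
    (hf : ∀ x, HasDerivAt f (f' x) x) (hQ : ∀ x, Q (f' x) = 0) (x y : 𝕜) :
    Q (f x) = Q (f y) := by
  have hQf (z : 𝕜) : HasDerivAt (fun w => Q (f w)) 0 z :=
    hQ z ▸ Q.hasFDerivAt.comp_hasDerivAt z (hf z)
  exact is_const_of_deriv_eq_zero (fun z => (hQf z).differentiableAt)
    (fun z => (hQf z).deriv) x y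

variable {P : E →L[𝕜] E}

theorem projection_eq_self_of_hasDerivAt (hP : IsIdempotentElem P) {f h : 𝕜 → E}
    (hf : ∀ x, HasDerivAt f (P (h x)) x) {x₀ : 𝕜} (h₀ : P (f x₀) = f x₀) (x : 𝕜) :
    P (f x) = f x := by
  have hker (y : 𝕜) : (1 - P) (P (h y)) = 0 := DFunLike.congr_fun hP.one_sub_mul_self (h y)
  have hconst := map_eq_map_of_hasDerivAt_of_map_eq_zero (1 - P) hf hker x x₀
  simp only [_root_.sub_apply, one_apply_eq_self, h₀, sub_self] at hconst
  exact (sub_eq_zero.mp hconst).symm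

theorem projection_eq_zero_of_hasDerivAt_one_sub (hP : IsIdempotentElem P) {f h : 𝕜 → E}
    (hf : ∀ x, HasDerivAt f ((1 - P) (h x)) x) {x₀ : 𝕜} (h₀ : P (f x₀) = 0) (x : 𝕜) :
    P (f x) = 0 := by
  have hker (y : 𝕜) : P ((1 - P) (h y)) = 0 := DFunLike.congr_fun hP.mul_one_sub_self (h y)
  rw [map_eq_map_of_hasDerivAt_of_map_eq_zero P hf hker x x₀, h₀]

theorem hasDerivAt_projection_of_commute (hP : IsIdempotentElem P) {A : E → E}
    (hPA : Function.Commute P A) {φ : 𝕜 → E} {c : E} {x : 𝕜}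
    (hφ : HasDerivAt φ (A (φ x) + c) x) :
    HasDerivAt (fun y => P (φ y)) (P (A (P (φ x)) + c)) x := by
  have hPAP : P (A (P (φ x))) = P (A (φ x)) := by
    rw [← hPA (φ x)]
    exact DFunLike.congr_fun hP.eq (A (φ x))
  rw [map_add, hPAP, ← map_add]
  exact P.hasFDerivAt.comp_hasDerivAt x hφ

theorem owns_exact_projection_consistency_general {M : 𝕜 → E →ₗ[𝕜] E} (hP : IsIdempotentElem P)
    (hPM : ∀ x, Function.Commute P (M x)) (g : 𝕜 → E) :
    (∀ φ' φ'' : 𝕜 → E,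
        (∀ x, HasDerivAt φ' (P (M x (φ' x) + g x)) x) →
        (∀ x, HasDerivAt φ'' ((1 - P) (M x (φ'' x) + g x)) x) →
        (∃ x₀, P (φ' x₀) = φ' x₀ ∧ P (φ'' x₀) = 0) →
        ∀ x, HasDerivAt (fun y => φ' y + φ'' y) (M x (φ' x + φ'' x) + g x) x) ∧
      ∀ φ : 𝕜 → E,
        (∀ x, HasDerivAt φ (M x (φ x) + g x) x) →
        (∀ x, HasDerivAt (fun y => P (φ y)) (P (M x (P (φ x)) + g x)) x) ∧
        ∀ x, HasDerivAt (fun y => (1 - P) (φ y)) ((1 - P) (M x ((1 - P) (φ x)) + g x)) x := by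
  refine ⟨?_, fun φ hφ => ⟨fun x => hasDerivAt_projection_of_commute hP (hPM x) (hφ x),
    fun x => hasDerivAt_projection_of_commute hP.one_sub (commute_one_sub_of_commute (hPM x))
      (hφ x)⟩⟩
  rintro φ' φ'' hφ' hφ'' ⟨x₀, h₀', h₀''⟩ x
  have hrange : P (φ' x) = φ' x := projection_eq_self_of_hasDerivAt hP hφ' h₀' x
  have hkernel : P (φ'' x) = 0 := projection_eq_zero_of_hasDerivAt_one_sub hP hφ'' h₀'' x
  exact ((hφ' x).fun_add (hφ'' x)).congr_deriv
    (map_add_one_sub_map_of_commute (hPM x) hrange hkernel (g x))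

end OneWayProjection

/-- Consistency of the exact one-way projection equations with the global
equation.  Let `P² = P`, `P M = M P` and `g` continuous.
(i) If `φ′`, `φ″` solve the one-way equations `dφ′/dx = P(Mφ′ + g)` and
`dφ″/dx = (I−P)(Mφ″ + g)` on `ℝ` and at some point `x₀` satisfy `P φ′(x₀) = φ′(x₀)` and
`P φ″(x₀) = 0`, then `φ = φ′ + φ″` solves the global equation `dφ/dx = Mφ + g` on `ℝ`.
(ii) Conversely, if `φ` solves the global equation, then `Pφ` and `(I−P)φ` solve the
respective one-way equations. -/
theorem owns_exact_projection_consistency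
    (N : ℕ) (M P : Matrix (Fin N) (Fin N) ℂ)
    (hP2 : P * P = P) (hPM : P * M = M * P)
    (g : ℝ → Fin N → ℂ) (hg : Continuous g) :
    ((∀ φ' φ'' : ℝ → Fin N → ℂ,
        (∀ x : ℝ, HasDerivAt φ' (P.mulVec (M.mulVec (φ' x) + g x)) x) →
        (∀ x : ℝ, HasDerivAt φ'' ((1 - P).mulVec (M.mulVec (φ'' x) + g x)) x) →
        (∃ x₀ : ℝ, P.mulVec (φ' x₀) = φ' x₀ ∧ P.mulVec (φ'' x₀) = 0) →
        ∀ x : ℝ, HasDerivAt (fun y => φ' y + φ'' y)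
          (M.mulVec (φ' x + φ'' x) + g x) x)
      ∧
      (∀ φ : ℝ → Fin N → ℂ,
        (∀ x : ℝ, HasDerivAt φ (M.mulVec (φ x) + g x) x) →
        (∀ x : ℝ, HasDerivAt (fun y => P.mulVec (φ y))
            (P.mulVec (M.mulVec (P.mulVec (φ x)) + g x)) x)
        ∧
        (∀ x : ℝ, HasDerivAt (fun y => (1 - P).mulVec (φ y))
            ((1 - P).mulVec (M.mulVec ((1 - P).mulVec (φ x)) + g x)) x))) := by
  simpa [sub_mulVec] using owns_exact_projection_consistency_general
    (P := (toLin' P).toContinuousLinearMap.restrictScalars ℝ)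
    (M := fun _ => (toLin' M).restrictScalars ℝ)
    (ContinuousLinearMap.ext fun v => by simp [hP2]) (fun _ v => by simp [hPM]) g
end

section
/- Let N = N₊ + N₋ with 1 ≤ N₊ ≤ N₋, α₁,…,α_N ∈ ℂ, and let V be an invertible N×N complex matrix with blocks V₊₊, V₊₋, V₋₊, V₋₋ where V₊₊, V₋₋ are invertible; set A = V₊₊⁻¹V₊₋, B = V₋₋⁻¹V₋₊, E = diag(1,…,1,0,…,0) with N₊ ones, and P = V E V⁻¹. (i) If α_m ≠ α_n for all downstream m (1 ≤ m ≤ N₊) and upstream n (N₊+1 ≤ n ≤ N), then with N_β = N₊, β₊^{m−1} = α_m for m = 1,…,N₊, and any β₋⁰,…,β₋^{N₊−1} with β₋ʲ ≠ α_k for all k, the resulting matrix R⁻¹ = fromBlocks(I₊₊, F₊₊AF₋₋⁻¹; F₋₋⁻¹BF₊₊, I₋₋) (with F_k = ∏_{j=0}^{N₊−1}(α_k−β₊ʲ)/(α_k−β₋ʲ)) equals I, and hence P_{N_β} = V R E R⁻¹ V⁻¹ = P. (ii) Conversely, if α_{m̃} = α_{ñ} for some downstream m̃ and upstream ñ and the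 (ñ−N₊, m̃) entry of B is nonzero, then for every N_β and every choice of recursion parameters with α_k ≠ β₊ʲ and α_k ≠ β₋ʲ for all k, j, one has R⁻¹ ≠ I. -/
/-!
The lower left block of `R⁻¹` has entries `F_n⁻¹ B_{nm} F_m` and the upper right one has entries
`F_m A_{mn} F_n⁻¹`. If no upstream eigenvalue is among the `β₊ʲ`, such an entry vanishes exactly
when that of `B` or `A` does or `F_m = 0`, the latter meaning that the downstream eigenvalue `α_m`
is one of the `β₊ʲ`. Hence `R⁻¹ = I` if and only if the `β₊ʲ` exhaust the downstream eigenvalues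
coupled to some upstream index, which is impossible when one of these is also an upstream
eigenvalue. Finally, `P_{N_β} = P` says that `R⁻¹` commutes with `E`, so that its off-diagonal
blocks vanish.
-/

open Matrix

section MatrixLemmas

variable {S m n : Type*} [Fintype m] [Fintype n]

theorem inv_diagonal_of_forall_ne_zero [DecidableEq n] [Field S] {d : n → S} (hd : ∀ j, d j ≠ 0) :
    (diagonal d)⁻¹ = diagonal d⁻¹ := by
  refine inv_eq_right_inv ?_
  simp only [diagonal_mul_diagonal, Pi.inv_apply, mul_inv_cancel₀ (hd _), diagonal_one]

theorem commute_fromBlocks_one_zero_iff [DecidableEq m] [Semiring S] {A : Matrix m m S}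
    {B : Matrix m n S} {C : Matrix n m S} {D : Matrix n n S} :
    Commute (fromBlocks 1 0 0 0) (fromBlocks A B C D) ↔ B = 0 ∧ C = 0 := by
  simp [commute_iff_eq, fromBlocks_multiply, fromBlocks_inj, eq_comm]

theorem conj_conj_eq_conj_iff_commute [DecidableEq n] [CommRing S] {V R : Matrix n n S}
    (hV : IsUnit V.det) (hR : IsUnit R.det) (E : Matrix n n S) :
    V * R⁻¹ * E * R * V⁻¹ = V * E * V⁻¹ ↔ Commute E R := by
  let := invertibleOfIsUnitDet V hV
  let := invertibleOfIsUnitDet R hR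
  rw [mul_inv_eq_iff_eq_mul_of_invertible, inv_mul_cancel_right_of_invertible]
  simp only [Matrix.mul_assoc]
  rw [Matrix.mul_right_inj_of_invertible, inv_mul_eq_iff_eq_mul_of_invertible, commute_iff_eq]

end MatrixLemmas

section Recursion

variable {K m n ι : Type*} [Field K] [Fintype m] [Fintype n] [Fintype ι]
  [DecidableEq m] [DecidableEq n]

/-- The OWNS-P product `F_k` as a function of the eigenvalue `a = α_k`. It is meaningful only when
`a` is none of the poles `βm j`: a factor with `a = βm j` takes the junk value `0`. -/
def recursionFactor (βp βm : ι → K) (a : K) : K :=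
  ∏ j, (a - βp j) / (a - βm j)

theorem recursionFactor_eq_zero_iff {βp βm : ι → K} {a : K} (hβm : ∀ j, a ≠ βm j) :
    recursionFactor βp βm a = 0 ↔ a ∈ Set.range βp := by
  simp only [recursionFactor, Finset.prod_eq_zero_iff, Finset.mem_univ, true_and, div_eq_zero_iff,
    sub_eq_zero, hβm, or_false, Set.mem_range, eq_comm (a := a)]

/-- The matrix `R⁻¹` of the OWNS-P approximation, for arbitrary factors `F` and coupling matrices
`A`, `B`; the downstream indices form the left summand. It is meaningful only when the upstream
factors are nonzero: otherwise the inverse of their diagonal matrix is the junk value `0`. -/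
noncomputable def recursionMatrixInv (F : m ⊕ n → K) (A : Matrix m n K) (B : Matrix n m K) :
    Matrix (m ⊕ n) (m ⊕ n) K :=
  fromBlocks 1 (diagonal (fun i => F (Sum.inl i)) * A * (diagonal (fun j => F (Sum.inr j)))⁻¹)
    ((diagonal (fun j => F (Sum.inr j)))⁻¹ * B * diagonal (fun i => F (Sum.inl i))) 1

theorem recursionMatrixInv_eq_one_iff {F : m ⊕ n → K} (hF : ∀ j, F (Sum.inr j) ≠ 0)
    (A : Matrix m n K) (B : Matrix n m K) :
    recursionMatrixInv F A B = 1 ↔ ∀ i, F (Sum.inl i) ≠ 0 → ∀ j, A i j = 0 ∧ B j i = 0 := by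
  rw [recursionMatrixInv, ← fromBlocks_one, fromBlocks_inj, inv_diagonal_of_forall_ne_zero hF]
  simp only [← Matrix.ext_iff, mul_diagonal, diagonal_mul, Pi.inv_apply, Matrix.zero_apply,
    mul_eq_zero, inv_eq_zero, hF]
  grind

theorem commute_recursionMatrixInv_iff (F : m ⊕ n → K) (A : Matrix m n K) (B : Matrix n m K) :
    Commute (fromBlocks 1 0 0 0) (recursionMatrixInv F A B) ↔ recursionMatrixInv F A B = 1 := by
  rw [recursionMatrixInv, commute_fromBlocks_one_zero_iff, ← fromBlocks_one, fromBlocks_inj]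
  simp only [true_and, and_true]

theorem recursionMatrixInv_recursionFactor_eq_one_iff {α : m ⊕ n → K} {βp βm : ι → K}
    (hβp : ∀ i j, α (Sum.inr i) ≠ βp j) (hβm : ∀ k j, α k ≠ βm j)
    (A : Matrix m n K) (B : Matrix n m K) :
    recursionMatrixInv (fun k => recursionFactor βp βm (α k)) A B = 1 ↔
      ∀ i, α (Sum.inl i) ∉ Set.range βp → ∀ j, A i j = 0 ∧ B j i = 0 := by
  have factor_eq_zero_iff (k : m ⊕ n) :
      recursionFactor βp βm (α k) = 0 ↔ α k ∈ Set.range βp :=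
    recursionFactor_eq_zero_iff (hβm k)
  have upstream_ne_zero (j : n) : recursionFactor βp βm (α (Sum.inr j)) ≠ 0 := by
    rw [ne_eq, factor_eq_zero_iff]
    exact fun ⟨l, hl⟩ => hβp j l hl.symm
  rw [recursionMatrixInv_eq_one_iff upstream_ne_zero]
  simp only [ne_eq, factor_eq_zero_iff]

theorem ownsP_minimal_parameter_set_general
    (α : m ⊕ n → K) (V : Matrix (m ⊕ n) (m ⊕ n) K) (hV : IsUnit V.det)
    (hVpp : IsUnit V.toBlocks₁₁.det) (hVmm : IsUnit V.toBlocks₂₂.det)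
    (βp βm : ι → K) (hβp : ∀ i j, α (Sum.inr i) ≠ βp j) (hβm : ∀ k j, α k ≠ βm j) :
    let A := V.toBlocks₁₁⁻¹ * V.toBlocks₁₂
    let B := V.toBlocks₂₂⁻¹ * V.toBlocks₂₁
    let E : Matrix (m ⊕ n) (m ⊕ n) K := fromBlocks 1 0 0 0
    let Rinv := recursionMatrixInv (fun k => recursionFactor βp βm (α k)) A B
    (Rinv = 1 ↔ ∀ i, α (Sum.inl i) ∉ Set.range βp → ∀ j, A i j = 0 ∧ B j i = 0) ∧
      (Rinv = 1 ↔ IsUnit Rinv.det ∧ V * Rinv⁻¹ * E * Rinv * V⁻¹ = V * E * V⁻¹) := by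
  intro A B E Rinv
  have isUnit_of_eq_one (h : Rinv = 1) : IsUnit Rinv.det := by simp [h]
  have projection_eq_iff (h : IsUnit Rinv.det) :
      V * Rinv⁻¹ * E * Rinv * V⁻¹ = V * E * V⁻¹ ↔ Rinv = 1 :=
    (conj_conj_eq_conj_iff_commute hV h E).trans (commute_recursionMatrixInv_iff _ A B)
  exact ⟨recursionMatrixInv_recursionFactor_eq_one_iff hβp hβm A B,
    fun h => ⟨isUnit_of_eq_one h, (projection_eq_iff (isUnit_of_eq_one h)).mpr h⟩,
    fun ⟨hdet, h⟩ => (projection_eq_iff hdet).mp h⟩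

end Recursion

/-- Minimal recursion-parameter set for exact OWNS-P convergence (case
`N₊ ≤ N₋`).  (i) If the downstream and upstream eigenvalues are distinct, then taking
`N_β = N₊`, `β₊ʲ = α_{j+1}` (the downstream eigenvalues) and any `β₋ʲ` avoiding all
eigenvalues, the block matrix `R⁻¹` equals `I` and hence `P_{N_β} = V R E R⁻¹ V⁻¹ = P`.
(ii) Conversely, if some downstream and upstream eigenvalues coincide and the corresponding
entry of `B = V₋₋⁻¹V₋₊` is nonzero, then `R⁻¹ ≠ I` for every choice of recursion
parameters avoiding the eigenvalues. -/
theorem ownsP_minimal_parameter_set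
    (np nm : ℕ) (hnp : 1 ≤ np) (hnpm : np ≤ nm)
    (α : Fin np ⊕ Fin nm → ℂ)
    (V : Matrix (Fin np ⊕ Fin nm) (Fin np ⊕ Fin nm) ℂ) (hV : IsUnit V.det)
    (hVpp : IsUnit (V.toBlocks₁₁).det) (hVmm : IsUnit (V.toBlocks₂₂).det)
    (A : Matrix (Fin np) (Fin nm) ℂ) (hA : A = (V.toBlocks₁₁)⁻¹ * V.toBlocks₁₂)
    (B : Matrix (Fin nm) (Fin np) ℂ) (hB : B = (V.toBlocks₂₂)⁻¹ * V.toBlocks₂₁)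
    (E : Matrix (Fin np ⊕ Fin nm) (Fin np ⊕ Fin nm) ℂ)
    (hE : E = Matrix.fromBlocks (1 : Matrix (Fin np) (Fin np) ℂ) 0 0
      (0 : Matrix (Fin nm) (Fin nm) ℂ))
    (P : Matrix (Fin np ⊕ Fin nm) (Fin np ⊕ Fin nm) ℂ) (hP : P = V * E * V⁻¹) :
    -- (i)
    ((∀ (m : Fin np) (n : Fin nm), α (Sum.inl m) ≠ α (Sum.inr n)) →
      ∀ βm : Fin np → ℂ, (∀ (j : Fin np) (k : Fin np ⊕ Fin nm), βm j ≠ α k) →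
        let F : Fin np ⊕ Fin nm → ℂ :=
          fun k => ∏ j : Fin np, (α k - α (Sum.inl j)) / (α k - βm j)
        let Rinv : Matrix (Fin np ⊕ Fin nm) (Fin np ⊕ Fin nm) ℂ :=
          Matrix.fromBlocks 1
            (Matrix.diagonal (fun i => F (Sum.inl i)) * A *
              (Matrix.diagonal (fun i => F (Sum.inr i)))⁻¹)
            ((Matrix.diagonal (fun i => F (Sum.inr i)))⁻¹ * B *
              Matrix.diagonal (fun i => F (Sum.inl i))) 1
        Rinv = 1 ∧ V * Rinv⁻¹ * E * Rinv * V⁻¹ = P)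
    ∧
    -- (ii)
    (∀ (m' : Fin np) (n' : Fin nm), α (Sum.inl m') = α (Sum.inr n') → B n' m' ≠ 0 →
      ∀ (Nβ : ℕ) (βp βm : Fin Nβ → ℂ),
        (∀ (k : Fin np ⊕ Fin nm) (j : Fin Nβ), α k ≠ βp j ∧ α k ≠ βm j) →
        let F : Fin np ⊕ Fin nm → ℂ :=
          fun k => ∏ j : Fin Nβ, (α k - βp j) / (α k - βm j)
        let Rinv : Matrix (Fin np ⊕ Fin nm) (Fin np ⊕ Fin nm) ℂ :=
          Matrix.fromBlocks 1
            (Matrix.diagonal (fun i => F (Sum.inl i)) * A *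
              (Matrix.diagonal (fun i => F (Sum.inr i)))⁻¹)
            ((Matrix.diagonal (fun i => F (Sum.inr i)))⁻¹ * B *
              Matrix.diagonal (fun i => F (Sum.inl i))) 1
        Rinv ≠ 1) := by
  subst hA hB hE hP
  refine ⟨fun hα βm hβm => ?_, fun m' n' hmn hBne Nβ βp βm hβ hR => ?_⟩
  · obtain ⟨eq_one_iff, eq_one_iff_proj⟩ := ownsP_minimal_parameter_set_general α V hV hVpp hVmm
      (fun j => α (Sum.inl j)) βm (fun i j => (hα j i).symm) (fun k j => (hβm j k).symm)
    have hR := eq_one_iff.mpr fun i hi => absurd (Set.mem_range_self i) hi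
    exact ⟨hR, (eq_one_iff_proj.mp hR).2⟩
  · obtain ⟨eq_one_iff, -⟩ := ownsP_minimal_parameter_set_general α V hV hVpp hVmm βp βm
      (fun i j => (hβ (Sum.inr i) j).1) (fun k j => (hβ k j).2)
    have hm' : α (Sum.inl m') ∉ Set.range βp := fun ⟨j, hj⟩ =>
      (hβ (Sum.inr n') j).1 (hmn.symm.trans hj.symm)
    exact hBne (eq_one_iff.mp hR m' hm' n').2
end

section
/- Let N = N₊ + N₋ with N₊, N₋ ≥ 1, let V be an invertible N×N complex matrix with blocks V₊₊, V₊₋, V₋₊, V₋₋ (V₊₊, V₋₋ invertible), let F₊₊ and F₋₋ be invertible diagonal matrices of sizes N₊ and N₋, set S = F₊₊V₊₊⁻¹V₊₋F₋₋⁻¹, T = F₋₋⁻¹V₋₋⁻¹V₋₊F₊₊, R⁻¹ = fromBlocks(I₊₊, S; T, I₋₋), E = diag(1,…,1,0,…,0) with N₊ ones, P = V E V⁻¹, and P_{N_β} = V R E R⁻¹ V⁻¹. Let a = ‖S‖ and b = ‖T‖, where ‖·‖ is the operator norm induced by the Euclidean norm on ℂᴺ. If a·b < 1 (so that R⁻¹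 is invertible), then ‖P − P_{N_β}‖ ≤ ‖V‖·‖V⁻¹‖·(a + 2ab + b)/(1 − ab). -/
open Matrix

/-- The operator norm of (the linear map associated with) a complex matrix, induced by the
Euclidean norms on the domain and codomain. -/
noncomputable def euclideanOpNorm {m n : Type*} [Fintype m] [Fintype n] [DecidableEq n]
    (A : Matrix m n ℂ) : ℝ :=
  ‖LinearMap.toContinuousLinearMap (Matrix.toEuclideanLin A)‖

/-!
Write `R⁻¹ = 1 + K`, where `K = fromBlocks 0 S T 0` is the coupling. Since `R⁻¹ (E - R E R⁻¹)` is
the commutator `⁅K, E⁆`, multiplying by `1 - K` shows that `D = E - R E R⁻¹` solves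
`D = K ^ 2 D + (1 - K) ⁅K, E⁆`. The matrix `K ^ 2` is block diagonal with blocks `S T` and `T S`, so
the first term is at most `a b ‖D‖` and can be absorbed. Up to signs, `⁅K, E⁆` is `K` and
`K ⁅K, E⁆` is `K ^ 2`, whose norms are at most `max a b` and `a b`. This gives
`‖D‖ ≤ (max a b + a b) / (1 - a b)`.
-/

open scoped Matrix.Norms.L2Operator

section NormedRing

variable {A : Type*} [NormedRing A]

theorem isUnit_one_add_of_norm_mul_self_lt_one [HasSummableGeomSeries A] {k : A}
    (hk : ‖k * k‖ < 1) : IsUnit (1 + k) := by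
  have hcomm : Commute (1 - k) (1 + k) :=
    (Commute.one_left _).sub_left ((Commute.one_right k).add_right (Commute.refl k))
  have hprod : (1 - k) * (1 + k) = 1 - k * k := by noncomm_ring
  exact (hcomm.isUnit_mul_iff.1 (hprod ▸ isUnit_one_sub_of_norm_lt_one hk)).2

theorem norm_sub_units_conj_le {k : A} (hk : ‖k * k‖ < 1) (u : Aˣ) (hu : (u : A) = 1 + k) (e : A) :
    ‖e - ↑u⁻¹ * e * u‖ ≤ (‖⁅k, e⁆‖ + ‖k * ⁅k, e⁆‖) / (1 - ‖k * k‖) := by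
  set d := e - ↑u⁻¹ * e * u
  have hcomm : (1 + k) * d = ⁅k, e⁆ := by
    calc (1 + k) * d = (1 + k) * e - e * (1 + k) := by
          simp [d, ← hu, mul_sub, mul_assoc]
      _ = ⁅k, e⁆ := by rw [Ring.lie_def]; noncomm_ring
  have hd : d = k * k * d + (⁅k, e⁆ - k * ⁅k, e⁆) := by
    rw [← hcomm]; noncomm_ring
  have hnorm : ‖d‖ ≤ ‖k * k‖ * ‖d‖ + (‖⁅k, e⁆‖ + ‖k * ⁅k, e⁆‖) := by
    calc ‖d‖ = ‖k * k * d + (⁅k, e⁆ - k * ⁅k, e⁆)‖ := congrArg _ hd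
      _ ≤ _ := norm_add_le_of_le (norm_mul_le _ _) (norm_sub_le _ _)
  rw [le_div_iff₀ (sub_pos.2 hk)]
  linarith

end NormedRing

section Blocks

variable {𝕜 l m n o : Type*} [RCLike 𝕜] [Fintype l] [Fintype m] [Fintype n] [Fintype o]

theorem norm_sq_toLp_sum (x : m ⊕ n → 𝕜) :
    ‖WithLp.toLp 2 x‖ ^ 2 =
      ‖WithLp.toLp 2 (x ∘ Sum.inl)‖ ^ 2 + ‖WithLp.toLp 2 (x ∘ Sum.inr)‖ ^ 2 := by
  simp [EuclideanSpace.norm_sq_eq]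

variable [DecidableEq l] [DecidableEq o]

theorem l2_opNorm_fromBlocks_diagonal_le (B : Matrix m l 𝕜) (C : Matrix n o 𝕜) :
    ‖fromBlocks B 0 0 C‖ ≤ max ‖B‖ ‖C‖ := by
  rw [l2_opNorm_def]
  refine ContinuousLinearMap.opNorm_le_bound _ (by positivity) fun x ↦ ?_
  refine le_of_sq_le_sq ?_ (by positivity)
  let y := WithLp.toLp 2 (x ∘ Sum.inl)
  let z := WithLp.toLp 2 (x ∘ Sum.inr)
  have hx : ‖x‖ ^ 2 = ‖y‖ ^ 2 + ‖z‖ ^ 2 := norm_sq_toLp_sum _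
  calc ‖WithLp.toLp 2 (fromBlocks B 0 0 C *ᵥ x)‖ ^ 2
      = ‖WithLp.toLp 2 (B *ᵥ y)‖ ^ 2 + ‖WithLp.toLp 2 (C *ᵥ z)‖ ^ 2 := by
        simp [norm_sq_toLp_sum, fromBlocks_mulVec, y, z]
    _ ≤ (‖B‖ * ‖y‖) ^ 2 + (‖C‖ * ‖z‖) ^ 2 := by
        gcongr <;> exact l2_opNorm_mulVec _ _
    _ ≤ (max ‖B‖ ‖C‖ * ‖y‖) ^ 2 + (max ‖B‖ ‖C‖ * ‖z‖) ^ 2 := by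
        gcongr
        exacts [le_max_left _ _, le_max_right _ _]
    _ = (max ‖B‖ ‖C‖ * ‖x‖) ^ 2 := by rw [mul_pow _ ‖x‖, hx]; ring

theorem l2_opNorm_fromBlocks_antidiagonal_le (B : Matrix m o 𝕜) (C : Matrix n l 𝕜) :
    ‖fromBlocks 0 B C 0‖ ≤ max ‖B‖ ‖C‖ := by
  refine le_of_sq_le_sq ?_ (by positivity)
  calc ‖fromBlocks 0 B C 0‖ ^ 2 = ‖(fromBlocks 0 B C 0)ᴴ * fromBlocks 0 B C 0‖ := by
        rw [l2_opNorm_conjTranspose_mul_self, sq]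
    _ = ‖fromBlocks (Cᴴ * C) 0 0 (Bᴴ * B)‖ := by
        simp [fromBlocks_conjTranspose, fromBlocks_multiply]
    _ ≤ max ‖Cᴴ * C‖ ‖Bᴴ * B‖ := l2_opNorm_fromBlocks_diagonal_le _ _
    _ ≤ max ‖B‖ ‖C‖ ^ 2 := by
        simp only [l2_opNorm_conjTranspose_mul_self, ← sq]
        exact max_le (by gcongr; exact le_max_right _ _) (by gcongr; exact le_max_left _ _)

end Blocks

section CoordinateProjection

variable {𝕜 l m n o : Type*} [RCLike 𝕜] [Fintype l] [Fintype m] [Fintype n] [Fintype o]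
  [DecidableEq m] [DecidableEq n] [DecidableEq o]
  {S : Matrix m n 𝕜} {T : Matrix n m 𝕜} {E Rinv : Matrix (m ⊕ n) (m ⊕ n) 𝕜}

theorem l2_opNorm_coordProj_sub_conj_le (hE : E = fromBlocks 1 0 0 0)
    (hRinv : Rinv = fromBlocks 1 S T 1) (hST : ‖S‖ * ‖T‖ < 1) :
    ‖E - Rinv⁻¹ * E * Rinv‖ ≤ (max ‖S‖ ‖T‖ + ‖S‖ * ‖T‖) / (1 - ‖S‖ * ‖T‖) := by
  let K : Matrix (m ⊕ n) (m ⊕ n) 𝕜 := fromBlocks 0 S T 0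
  have hTS : ‖T * S‖ ≤ ‖S‖ * ‖T‖ := (l2_opNorm_mul T S).trans_eq (mul_comm _ _)
  have hKK : ‖K * K‖ ≤ ‖S‖ * ‖T‖ := by
    have h : K * K = fromBlocks (S * T) 0 0 (T * S) := by simp [K, fromBlocks_multiply]
    exact h ▸ (l2_opNorm_fromBlocks_diagonal_le _ _).trans (max_le (l2_opNorm_mul S T) hTS)
  have hKE : ⁅K, E⁆ = fromBlocks 0 (-S) T 0 := by
    simp [K, hE, Ring.lie_def, fromBlocks_multiply, sub_eq_add_neg, fromBlocks_neg,
      fromBlocks_add]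
  have hcomm : ‖⁅K, E⁆‖ ≤ max ‖S‖ ‖T‖ := by
    simpa [hKE] using l2_opNorm_fromBlocks_antidiagonal_le (-S) T
  have hKcomm : ‖K * ⁅K, E⁆‖ ≤ ‖S‖ * ‖T‖ := by
    have h : K * ⁅K, E⁆ = fromBlocks (S * T) 0 0 (-(T * S)) := by
      simp [hKE, K, fromBlocks_multiply]
    rw [h]
    refine (l2_opNorm_fromBlocks_diagonal_le _ _).trans (max_le (l2_opNorm_mul S T) ?_)
    rwa [norm_neg]
  have hRinvK : Rinv = 1 + K := by
    simp [hRinv, K, ← fromBlocks_one, fromBlocks_add]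
  have : CompleteSpace (Matrix (m ⊕ n) (m ⊕ n) 𝕜) := FiniteDimensional.complete 𝕜 _
  obtain ⟨u, hu⟩ := isUnit_one_add_of_norm_mul_self_lt_one (hKK.trans_lt hST)
  rw [hRinvK, ← hu, ← coe_units_inv]
  refine (norm_sub_units_conj_le (hKK.trans_lt hST) u hu E).trans ?_
  gcongr

theorem ownsP_error_bound_general (V : Matrix l (m ⊕ n) 𝕜) (W : Matrix (m ⊕ n) o 𝕜)
    (hE : E = fromBlocks 1 0 0 0) (hRinv : Rinv = fromBlocks 1 S T 1) (hST : ‖S‖ * ‖T‖ < 1) :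
    ‖V * E * W - V * Rinv⁻¹ * E * Rinv * W‖ ≤
      ‖V‖ * ‖W‖ * ((max ‖S‖ ‖T‖ + ‖S‖ * ‖T‖) / (1 - ‖S‖ * ‖T‖)) := by
  calc ‖V * E * W - V * Rinv⁻¹ * E * Rinv * W‖ = ‖V * (E - Rinv⁻¹ * E * Rinv) * W‖ := by
        simp only [Matrix.mul_sub, Matrix.sub_mul, Matrix.mul_assoc]
    _ ≤ ‖V‖ * ‖E - Rinv⁻¹ * E * Rinv‖ * ‖W‖ :=
        (l2_opNorm_mul _ _).trans (by gcongr; exact l2_opNorm_mul _ _)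
    _ ≤ ‖V‖ * ((max ‖S‖ ‖T‖ + ‖S‖ * ‖T‖) / (1 - ‖S‖ * ‖T‖)) * ‖W‖ := by
        gcongr; exact l2_opNorm_coordProj_sub_conj_le hE hRinv hST
    _ = _ := by ring

end CoordinateProjection

theorem euclideanOpNorm_eq_l2_opNorm {m n : Type*} [Fintype m] [Fintype n] [DecidableEq n]
    (A : Matrix m n ℂ) : euclideanOpNorm A = ‖A‖ := rfl

theorem max_add_mul_le_add_two_mul_add {a b : ℝ} (ha : 0 ≤ a) (hb : 0 ≤ b) :
    max a b + a * b ≤ a + 2 * a * b + b := by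
  linarith [max_le_add_of_nonneg ha hb, mul_nonneg ha hb]

/-- Quantitative OWNS-P error bound: with `S = F₊₊V₊₊⁻¹V₊₋F₋₋⁻¹`,
`T = F₋₋⁻¹V₋₋⁻¹V₋₊F₊₊`, `R⁻¹ = fromBlocks(I, S; T, I)`, `a = ‖S‖`, `b = ‖T‖` and `a·b < 1`,
the exact projection `P = V E V⁻¹` and the OWNS-P approximation `P_{N_β} = V R E R⁻¹ V⁻¹`
satisfy `‖P − P_{N_β}‖ ≤ ‖V‖‖V⁻¹‖(a + 2ab + b)/(1 − ab)`. -/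
theorem ownsP_error_bound
    (np nm : ℕ) (hnp : 1 ≤ np) (hnm : 1 ≤ nm)
    (V : Matrix (Fin np ⊕ Fin nm) (Fin np ⊕ Fin nm) ℂ) (hV : IsUnit V.det)
    (hVpp : IsUnit (V.toBlocks₁₁).det) (hVmm : IsUnit (V.toBlocks₂₂).det)
    (fpp : Fin np → ℂ) (hfpp : ∀ i, fpp i ≠ 0)
    (fmm : Fin nm → ℂ) (hfmm : ∀ i, fmm i ≠ 0)
    (Fpp : Matrix (Fin np) (Fin np) ℂ) (hFpp : Fpp = Matrix.diagonal fpp)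
    (Fmm : Matrix (Fin nm) (Fin nm) ℂ) (hFmm : Fmm = Matrix.diagonal fmm)
    (S : Matrix (Fin np) (Fin nm) ℂ) (hS : S = Fpp * (V.toBlocks₁₁)⁻¹ * V.toBlocks₁₂ * Fmm⁻¹)
    (T : Matrix (Fin nm) (Fin np) ℂ) (hT : T = Fmm⁻¹ * (V.toBlocks₂₂)⁻¹ * V.toBlocks₂₁ * Fpp)
    (Rinv : Matrix (Fin np ⊕ Fin nm) (Fin np ⊕ Fin nm) ℂ)
    (hRinv : Rinv = Matrix.fromBlocks 1 S T 1)
    (E : Matrix (Fin np ⊕ Fin nm) (Fin np ⊕ Fin nm) ℂ)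
    (hE : E = Matrix.fromBlocks (1 : Matrix (Fin np) (Fin np) ℂ) 0 0
      (0 : Matrix (Fin nm) (Fin nm) ℂ))
    (P : Matrix (Fin np ⊕ Fin nm) (Fin np ⊕ Fin nm) ℂ) (hP : P = V * E * V⁻¹)
    (PNβ : Matrix (Fin np ⊕ Fin nm) (Fin np ⊕ Fin nm) ℂ)
    (hPNβ : PNβ = V * Rinv⁻¹ * E * Rinv * V⁻¹)
    (a b : ℝ) (ha : a = euclideanOpNorm S) (hb : b = euclideanOpNorm T)
    (hab : a * b < 1) :
    euclideanOpNorm (P - PNβ) ≤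
      euclideanOpNorm V * euclideanOpNorm V⁻¹ * ((a + 2 * a * b + b) / (1 - a * b)) := by
  subst hP hPNβ ha hb
  simp only [euclideanOpNorm_eq_l2_opNorm] at hab ⊢
  refine (ownsP_error_bound_general V V⁻¹ hE hRinv hab).trans ?_
  gcongr _ * (?_ / _)
  exact max_add_mul_le_add_two_mul_add (norm_nonneg S) (norm_nonneg T)
end

section
/- Let N = N₊ + N₋ with N₊, N₋ ≥ 1, α₁,…,α_N ∈ ℂ with α_m ≠ α_n for every downstream m (1 ≤ m ≤ N₊) and upstream n (N₊+1 ≤ n ≤ N), D = diag(iα₁,…,iα_N), V invertible with M = V D V⁻¹, and let R⁻¹ = fromBlocks(I₊₊, S; T, I₋₋) be invertible, where S is any N₊×N₋ and T any N₋×N₊ complex matrix. With E = diag(1,…,1,0,…,0) (N₊ ones) and P_{N_β} = V R E R⁻¹ V⁻¹, the matrix P_{N_β} commutes with M if and only if R⁻¹ = I (equivalently S = 0 and T = 0). -/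
open Matrix

/-!
In the eigenbasis of `M` the question is whether `Q = R * E * R⁻¹` commutes with the diagonal matrix
`D`. Since no downstream eigenvalue equals an upstream one, such a `Q` is block diagonal. The
intertwining relation `R⁻¹ * Q = E * R⁻¹`, read block by block, then forces the off-diagonal blocks
of `R⁻¹` to vanish: the first column of blocks gives `T * Q₁₁ = 0` with `Q₁₁ = 1`, the second
`S * Q₂₂ = S` with `Q₂₂ = 0`.
-/

theorem commute_units_conj_iff {G : Type*} [Monoid G] (u : Gˣ) {a b : G} :
    Commute (u * a * ↑u⁻¹) (u * b * ↑u⁻¹) ↔ Commute a b :=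
  commute_map_iff (MulDistribMulAction.toMulEquiv G (ConjAct.toConjAct u)).injective

theorem commute_conj_nonsing_inv_iff {n K : Type*} [Fintype n] [DecidableEq n] [CommRing K]
    {V A B : Matrix n n K} (hV : IsUnit V.det) :
    Commute (V * A * V⁻¹) (V * B * V⁻¹) ↔ Commute A B :=
  commute_units_conj_iff (V.nonsingInvUnit hV)

theorem apply_eq_zero_of_commute_diagonal {n K : Type*} [Fintype n] [DecidableEq n]
    [CommSemiring K] [IsCancelMulZero K] {Q : Matrix n n K} {d : n → K}
    (hQ : Commute Q (diagonal d)) {i j : n} (hij : d i ≠ d j) : Q i j = 0 := by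
  have hentry : Q i j * d j = d i * Q i j := by
    simpa only [mul_diagonal, diagonal_mul] using congr_fun₂ hQ.eq i j
  by_contra hne
  exact hij (mul_right_cancel₀ hne (hentry.symm.trans (mul_comm _ _)))

section Blocks

variable {m n K : Type*} [Fintype m] [DecidableEq m] [Fintype n] [DecidableEq n]

theorem eq_fromBlocks_toBlocks_of_commute_diagonal [CommSemiring K] [IsCancelMulZero K]
    {Q : Matrix (m ⊕ n) (m ⊕ n) K} {d : m ⊕ n → K}
    (hd : ∀ i j, d (Sum.inl i) ≠ d (Sum.inr j)) (hQ : Commute Q (diagonal d)) :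
    Q = fromBlocks Q.toBlocks₁₁ 0 0 Q.toBlocks₂₂ := by
  have h₁₂ : Q.toBlocks₁₂ = 0 := by
    ext i j
    exact apply_eq_zero_of_commute_diagonal hQ (hd i j)
  have h₂₁ : Q.toBlocks₂₁ = 0 := by
    ext j i
    exact apply_eq_zero_of_commute_diagonal hQ (hd i j).symm
  conv_lhs => rw [← fromBlocks_toBlocks Q, h₁₂, h₂₁]

theorem commute_fromBlocks_one_zero_diagonal [CommSemiring K] (d : m ⊕ n → K) :
    Commute (fromBlocks 1 0 0 0) (diagonal d) := by
  have hproj : (fromBlocks 1 0 0 0 : Matrix (m ⊕ n) (m ⊕ n) K) = diagonal (Sum.elim 1 0) := by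
    rw [← fromBlocks_diagonal, Pi.one_def, diagonal_one, Pi.zero_def, diagonal_zero]
  rw [hproj]
  exact commute_diagonal _ _

theorem fromBlocks_one_one_eq_one_of_intertwines [NonAssocSemiring K] {S : Matrix m n K}
    {T : Matrix n m K} {A : Matrix m m K} {B : Matrix n n K}
    (h : fromBlocks 1 S T 1 * fromBlocks A 0 0 B = fromBlocks 1 0 0 0 * fromBlocks 1 S T 1) :
    fromBlocks 1 S T 1 = 1 := by
  simp only [fromBlocks_multiply, fromBlocks_inj, Matrix.one_mul, Matrix.mul_zero,
    Matrix.zero_mul, add_zero, zero_add] at h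
  obtain ⟨rfl, hS, hT, rfl⟩ := h
  rw [Matrix.mul_zero] at hS
  rw [Matrix.mul_one] at hT
  rw [← hS, hT, fromBlocks_one]

theorem commute_conj_fromBlocks_diagonal_iff [CommRing K] [NoZeroDivisors K] {d : m ⊕ n → K}
    (hd : ∀ i j, d (Sum.inl i) ≠ d (Sum.inr j)) {S : Matrix m n K} {T : Matrix n m K}
    (hdet : IsUnit (fromBlocks 1 S T 1).det) :
    Commute ((fromBlocks 1 S T 1)⁻¹ * fromBlocks 1 0 0 0 * fromBlocks 1 S T 1) (diagonal d) ↔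
      fromBlocks 1 S T 1 = 1 := by
  constructor
  · intro hcomm
    set Q := (fromBlocks 1 S T 1)⁻¹ * fromBlocks 1 0 0 0 * fromBlocks 1 S T 1 with hQ
    have hintertwine : fromBlocks 1 S T 1 * Q = fromBlocks 1 0 0 0 * fromBlocks 1 S T 1 := by
      rw [hQ, Matrix.mul_assoc, mul_nonsing_inv_cancel_left _ _ hdet]
    rw [eq_fromBlocks_toBlocks_of_commute_diagonal hd hcomm] at hintertwine
    exact fromBlocks_one_one_eq_one_of_intertwines hintertwine
  · intro hone
    rw [hone, inv_one, Matrix.one_mul, Matrix.mul_one]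
    exact commute_fromBlocks_one_zero_diagonal d

theorem ownsP_commutes_iff_converged_general [CommRing K] [NoZeroDivisors K] {d : m ⊕ n → K}
    (hd : ∀ i j, d (Sum.inl i) ≠ d (Sum.inr j))
    {V : Matrix (m ⊕ n) (m ⊕ n) K} (hV : IsUnit V.det) {S : Matrix m n K} {T : Matrix n m K}
    (hdet : IsUnit (fromBlocks 1 S T 1).det) :
    Commute (V * (fromBlocks 1 S T 1)⁻¹ * fromBlocks 1 0 0 0 * fromBlocks 1 S T 1 * V⁻¹)
        (V * diagonal d * V⁻¹) ↔
      fromBlocks 1 S T 1 = 1 := by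
  rw [← commute_conj_fromBlocks_diagonal_iff hd hdet, Matrix.mul_assoc V,
    Matrix.mul_assoc V, commute_conj_nonsing_inv_iff hV]

end Blocks

/-- The OWNS-P approximate projection `P_{N_β} = V R E R⁻¹ V⁻¹`, with
`R⁻¹ = fromBlocks(I, S; T, I)` invertible and distinct downstream/upstream eigenvalues,
commutes with `M = V D V⁻¹` if and only if `R⁻¹ = I`. -/
theorem ownsP_commutes_iff_converged
    (np nm : ℕ) (hnp : 1 ≤ np) (hnm : 1 ≤ nm)
    (α : Fin np ⊕ Fin nm → ℂ)
    (hsep : ∀ (m : Fin np) (n : Fin nm), α (Sum.inl m) ≠ α (Sum.inr n))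
    (D : Matrix (Fin np ⊕ Fin nm) (Fin np ⊕ Fin nm) ℂ)
    (hD : D = Matrix.diagonal (fun k => Complex.I * α k))
    (V : Matrix (Fin np ⊕ Fin nm) (Fin np ⊕ Fin nm) ℂ) (hV : IsUnit V.det)
    (M : Matrix (Fin np ⊕ Fin nm) (Fin np ⊕ Fin nm) ℂ) (hM : M = V * D * V⁻¹)
    (S : Matrix (Fin np) (Fin nm) ℂ) (T : Matrix (Fin nm) (Fin np) ℂ)
    (Rinv : Matrix (Fin np ⊕ Fin nm) (Fin np ⊕ Fin nm) ℂ)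
    (hRinv : Rinv = Matrix.fromBlocks 1 S T 1)
    (hRunit : IsUnit Rinv.det)
    (E : Matrix (Fin np ⊕ Fin nm) (Fin np ⊕ Fin nm) ℂ)
    (hE : E = Matrix.fromBlocks (1 : Matrix (Fin np) (Fin np) ℂ) 0 0
      (0 : Matrix (Fin nm) (Fin nm) ℂ))
    (P : Matrix (Fin np ⊕ Fin nm) (Fin np ⊕ Fin nm) ℂ)
    (hP : P = V * Rinv⁻¹ * E * Rinv * V⁻¹) :
    P * M = M * P ↔ Rinv = 1 := by
  subst hD hM hRinv hE hP
  exact ownsP_commutes_iff_converged_general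
    (fun i j h ↦ hsep i j (mul_left_cancel₀ Complex.I_ne_zero h)) hV hRunit
end

section
/- Let N = N₊ + N₋ with 1 ≤ N₊ ≤ N₋ and α₁,…,α_N ∈ ℂ, with downstream indices 1,…,N₊ and upstream indices N₊+1,…,N. Take the minimal OWNS-P parameter set: N_β = N₊, β₊ʲ = α_{j+1} for j = 0,…,N₊−1, and β₋⁰,…,β₋^{N₊−1} with β₋ʲ ≠ α_k for all k; let c ∈ ℂ, c ≠ 0, and suppose for every upstream index k the denominator ∏_j(α_k−β₋ʲ) + c∏_j(α_k−β₊ʲ) is nonzero. Then for every upstream index k the OWNS-R approximate eigenvalue E⁽ᵏ⁾ = ∏_j(α_k−β₋ʲ) / (∏_j(α_k−β₋ʲ) + c∏_j(α_k−β₊ʲ)) is nonzero; consequently, for any invertible V, the OWNS-R matrix P^{(R)} = V diag(E⁽¹⁾,…,E⁽ᴺ⁾) V⁻¹ is not equal to the exact projection P = V E V⁻¹, even though the same parameters make the OWNS-P approximation exact. -/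
open Matrix

/-! At an upstream eigenvalue `z` the exact projection has eigenvalue `0`, whereas the numerator
`∏ j, (z - β₋ʲ)` of the OWNS-R eigenvalue vanishes only if some `β₋ʲ` equals `z`. So OWNS-R is
inexact as soon as `β₋` avoids one upstream eigenvalue, however `β₊` and `c` are chosen. -/

theorem conj_inj_of_isUnit_det {R n : Type*} [CommRing R] [Fintype n] [DecidableEq n]
    {V : Matrix n n R} (hV : IsUnit V.det) {A B : Matrix n n R} :
    V * A * V⁻¹ = V * B * V⁻¹ ↔ A = B := by
  have hVunit : IsUnit V := V.isUnit_iff_isUnit_det.mpr hV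
  have hVinv : IsUnit V⁻¹ := isUnit_nonsing_inv_iff.mpr hVunit
  rw [hVinv.mul_left_inj, hVunit.mul_right_inj]

theorem diagonal_eq_fromBlocks_one_zero_iff {R p q : Type*} [Zero R] [One R]
    [DecidableEq p] [DecidableEq q] {d : p ⊕ q → R} :
    diagonal d = fromBlocks 1 0 0 0 ↔ (∀ i, d (Sum.inl i) = 1) ∧ ∀ k, d (Sum.inr k) = 0 := by
  rw [← diagonal_one, ← diagonal_zero, fromBlocks_diagonal, diagonal_eq_diagonal_iff, Sum.forall]
  rfl

section OwnsR

variable {K ι : Type*} [Field K] [Fintype ι]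

/-- The OWNS-R approximate eigenvalue at the exact eigenvalue `z`, for the recursion parameters
`β₊ = βp`, `β₋ = βm` and the constant `c`. The `N_β` steps of the recursion are indexed by an
arbitrary finite type `ι`. The value is the junk value `0` where the denominator vanishes. -/
def ownsREigenvalue (βp βm : ι → K) (c z : K) : K :=
  (∏ j, (z - βm j)) / ((∏ j, (z - βm j)) + c * ∏ j, (z - βp j))

theorem ownsREigenvalue_ne_zero {βp βm : ι → K} {c z : K} (hβm : ∀ j, βm j ≠ z)
    (hden : (∏ j, (z - βm j)) + c * ∏ j, (z - βp j) ≠ 0) :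
    ownsREigenvalue βp βm c z ≠ 0 :=
  div_ne_zero (Finset.prod_ne_zero_iff.mpr fun j _ => sub_ne_zero.mpr (hβm j).symm) hden

theorem ownsR_not_exact_with_minimal_ownsP_parameters_general {p q : Type*}
    [Fintype p] [DecidableEq p] [Fintype q] [DecidableEq q] [Nonempty q]
    (α : p ⊕ q → K) (βp βm : ι → K) (hβm : ∀ j k, βm j ≠ α (Sum.inr k)) (c : K)
    (hden : ∀ k, (∏ j, (α (Sum.inr k) - βm j)) + c * ∏ j, (α (Sum.inr k) - βp j) ≠ 0) :
    (∀ k, ownsREigenvalue βp βm c (α (Sum.inr k)) ≠ 0) ∧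
    ∀ V : Matrix (p ⊕ q) (p ⊕ q) K, IsUnit V.det →
      V * diagonal (fun k => ownsREigenvalue βp βm c (α k)) * V⁻¹ ≠
        V * fromBlocks 1 0 0 0 * V⁻¹ := by
  have upstream_ne_zero (k : q) : ownsREigenvalue βp βm c (α (Sum.inr k)) ≠ 0 :=
    ownsREigenvalue_ne_zero (fun j => hβm j k) (hden k)
  refine ⟨upstream_ne_zero, fun V hV hexact => ?_⟩
  obtain ⟨-, upstream_eq_zero⟩ :=
    diagonal_eq_fromBlocks_one_zero_iff.mp ((conj_inj_of_isUnit_det hV).mp hexact)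
  obtain ⟨k⟩ := ‹Nonempty q›
  exact upstream_ne_zero k (upstream_eq_zero k)

end OwnsR

/-- The minimal OWNS-P parameter set (`N_β = N₊`, `β₊ʲ` the downstream
eigenvalues, `β₋ʲ` avoiding all eigenvalues) does not make OWNS-R exact: every upstream
approximate eigenvalue `E⁽ᵏ⁾` is nonzero, hence `P^{(R)} = V diag(E⁽ᵏ⁾) V⁻¹` differs from
the exact projection `P = V E V⁻¹` for every invertible `V`. -/
theorem ownsR_not_exact_with_minimal_ownsP_parameters
    (np nm : ℕ) (hnp : 1 ≤ np) (hnpm : np ≤ nm)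
    (α : Fin np ⊕ Fin nm → ℂ)
    (βp βm : Fin np → ℂ)
    (hβp : ∀ j : Fin np, βp j = α (Sum.inl j))
    (hβm : ∀ (j : Fin np) (k : Fin np ⊕ Fin nm), βm j ≠ α k)
    (c : ℂ) (hc : c ≠ 0)
    (hden : ∀ k : Fin nm,
      (∏ j : Fin np, (α (Sum.inr k) - βm j)) +
        c * ∏ j : Fin np, (α (Sum.inr k) - βp j) ≠ 0) :
    let Ev : Fin np ⊕ Fin nm → ℂ := fun k =>
      (∏ j : Fin np, (α k - βm j)) /
        ((∏ j : Fin np, (α k - βm j)) + c * ∏ j : Fin np, (α k - βp j))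
    (∀ k : Fin nm, Ev (Sum.inr k) ≠ 0) ∧
    (∀ V : Matrix (Fin np ⊕ Fin nm) (Fin np ⊕ Fin nm) ℂ, IsUnit V.det →
      V * Matrix.diagonal Ev * V⁻¹ ≠
        V * Matrix.fromBlocks (1 : Matrix (Fin np) (Fin np) ℂ) 0 0
          (0 : Matrix (Fin nm) (Fin nm) ℂ) * V⁻¹) := by
  have : Nonempty (Fin nm) := Fin.pos_iff_nonempty.mp (hnp.trans hnpm)
  exact ownsR_not_exact_with_minimal_ownsP_parameters_general α βp βm
    (fun j k => hβm j (Sum.inr k)) c hden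
end

section
/- Let α₁,…,α_N ∈ ℂ, D = diag(iα₁,…,iα_N), V an invertible N×N complex matrix, M = V D V⁻¹, and β₊¹,…,β₊^{N_β}, β₋¹,…,β₋^{N_β}, β_*¹,…,β_*^{N_β} ∈ ℂ such that α_k ≠ β₋ʲ and α_k ≠ β_*ʲ for all k, j, and such that the polynomial identity 2∏_{j=1}^{N_β}(z−β_*ʲ) = ∏_{j=1}^{N_β}(z−β₋ʲ) + ∏_{j=1}^{N_β}(z−β₊ʲ) holds at z = α_k for every k. Set Z = ∏_{j=1}^{N_β}(M − iβ₊ʲI)(M − iβ₋ʲI)⁻¹ and assume I + Z is invertible. Then (I + Z)⁻¹ = (1/2)·∏_{j=1}^{N_β}(M − iβ_*ʲI)⁻¹(M − iβ₋ʲI). -/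
open Matrix

/-!
Every factor is the value at `M` of a linear polynomial or the inverse of such a value, so all
factors commute and the products collapse to `Z = P Q⁻¹` and `∏ (M - iβ_*ʲ)⁻¹ (M - iβ₋ʲ) = Q S⁻¹`,
where `P`, `Q`, `S` are the values at `M` of the monic polynomials with roots `iβ₊ʲ`, `iβ₋ʲ`,
`iβ_*ʲ`. A polynomial in a diagonalizable matrix is determined by its values at the eigenvalues, so
the averaging identity at the `α_k` gives `2S = Q + P`, that is, `1 + Z = 2 S Q⁻¹`.
-/

open Polynomial
open scoped Ring

section RingInverse

variable {A : Type*}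

theorem commute_ringInverse_right [MonoidWithZero A] {a b : A} (h : Commute a b) :
    Commute a b⁻¹ʳ := by
  by_cases hb : IsUnit b
  · obtain ⟨u, rfl⟩ := hb
    rw [Ring.inverse_unit]
    exact h.units_inv_right
  · rw [Ring.inverse_non_unit b hb]
    exact Commute.zero_right a

theorem list_prod_map_mul_ringInverse {ι B : Type*} [CommMonoid B] [MonoidWithZero A]
    (φ : B →* A) (f g : ι → B) (l : List ι) :
    (l.map fun j => φ (f j) * (φ (g j))⁻¹ʳ).prod =
      φ (l.map f).prod * (φ (l.map g).prod)⁻¹ʳ := by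
  have hcomm (x y : B) : Commute (φ x) (φ y) := (Commute.all x y).map φ
  induction l with
  | nil => simp
  | cons j l ih =>
    simp only [List.map_cons, List.prod_cons, map_mul, ih]
    set F := (l.map f).prod
    set G := (l.map g).prod
    calc φ (f j) * (φ (g j))⁻¹ʳ * (φ F * (φ G)⁻¹ʳ)
        = φ (f j) * ((φ (g j))⁻¹ʳ * φ F) * (φ G)⁻¹ʳ := by simp only [mul_assoc]
      _ = φ (f j) * (φ F * (φ (g j))⁻¹ʳ) * (φ G)⁻¹ʳ := by
          rw [(commute_ringInverse_right (hcomm F (g j))).eq]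
      _ = φ (f j) * φ F * ((φ (g j))⁻¹ʳ * (φ G)⁻¹ʳ) := by simp only [mul_assoc]
      _ = φ (f j) * φ F * (φ (g j) * φ G)⁻¹ʳ := by
          rw [(hcomm (g j) G).eq, Ring.mul_inverse_rev' (hcomm G (g j))]

theorem ringInverse_one_add_mul_ringInverse {R : Type*} [CommSemiring R] [Semiring A]
    [Algebra R A] {c : R} [Invertible c] {P Q S : A} (hQ : IsUnit Q) (hS : IsUnit S)
    (h : c • S = Q + P) :
    (1 + P * Q⁻¹ʳ)⁻¹ʳ = ⅟c • (Q * S⁻¹ʳ) := by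
  have hfactor : 1 + P * Q⁻¹ʳ = c • (S * Q⁻¹ʳ) := by
    rw [← smul_mul_assoc, h, add_mul, Ring.mul_inverse_cancel Q hQ]
  obtain ⟨q, rfl⟩ := hQ
  obtain ⟨s, rfl⟩ := hS
  rw [hfactor, Ring.inverse_unit, Ring.inverse_unit]
  exact Ring.inverse_unit ⟨c • ((s : A) * ↑q⁻¹), ⅟c • ((q : A) * ↑s⁻¹),
    by simp [mul_assoc], by simp [mul_assoc]⟩

end RingInverse

section PolynomialValues

variable {R A : Type*} [CommRing R] [Ring A] [Algebra R A] {M : A}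

theorem aeval_X_sub_C (b : R) : aeval M (X - C b) = M - b • 1 := by
  rw [map_sub, aeval_X, aeval_C, Algebra.algebraMap_eq_smul_one]

theorem isUnit_aeval_prod_X_sub_C {ι : Type*} {s : Finset ι} {β : ι → R}
    (hβ : ∀ j ∈ s, β j ∉ spectrum R M) : IsUnit (aeval M (∏ j ∈ s, (X - C (β j)))) := by
  refine Finset.prod_induction _ (fun p => IsUnit (aeval M p)) ?_ ?_ fun j hj => ?_
  · intro p q hp hq
    rw [map_mul]
    exact hp.mul hq
  · rw [map_one]
    exact isUnit_one
  · rw [map_sub, aeval_X, aeval_C, IsUnit.sub_iff]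
    exact spectrum.notMem_iff.mp (hβ j hj)

theorem list_prod_sub_mul_ringInverse_sub (Nβ : ℕ) (a b : Fin Nβ → R) :
    ((List.finRange Nβ).map fun j => (M - a j • 1) * (M - b j • 1)⁻¹ʳ).prod =
      aeval M (∏ j, (X - C (a j))) * (aeval M (∏ j, (X - C (b j))))⁻¹ʳ := by
  simp only [← aeval_X_sub_C, ← List.prod_ofFn, List.ofFn_eq_map]
  exact list_prod_map_mul_ringInverse (aeval M : R[X] →ₐ[R] A).toMonoidHom _ _ _

theorem ownsR_practical_implementation_general [Invertible (2 : R)] (Nβ : ℕ)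
    (βp βm βs : Fin Nβ → R)
    (hm : ∀ j, βm j ∉ spectrum R M) (hs : ∀ j, βs j ∉ spectrum R M)
    (hpoly : aeval M (2 * ∏ j, (X - C (βs j))) =
      aeval M (∏ j, (X - C (βm j)) + ∏ j, (X - C (βp j)))) :
    (1 + ((List.finRange Nβ).map fun j => (M - βp j • 1) * (M - βm j • 1)⁻¹ʳ).prod)⁻¹ʳ =
      ⅟(2 : R) • ((List.finRange Nβ).map fun j =>
        (M - βs j • 1)⁻¹ʳ * (M - βm j • 1)).prod := by
  have hcomm (a b : R) : Commute (M - a • 1) (M - b • 1)⁻¹ʳ := by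
    simp only [← aeval_X_sub_C]
    exact commute_ringInverse_right ((Commute.all (X - C a) (X - C b)).map (aeval M))
  simp only [← (hcomm _ _).eq, list_prod_sub_mul_ringInverse_sub]
  apply ringInverse_one_add_mul_ringInverse
  · exact isUnit_aeval_prod_X_sub_C fun j _ => hm j
  · exact isUnit_aeval_prod_X_sub_C fun j _ => hs j
  · rw [← map_add, ← hpoly, ← map_smul, smul_eq_C_mul, C_ofNat]

end PolynomialValues

section Diagonalizable

variable {n R : Type*} [Fintype n] [DecidableEq n]

theorem aeval_conj_diagonal [CommRing R] {V : Matrix n n R} (hV : IsUnit V.det) (d : n → R)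
    (p : R[X]) :
    aeval (V * diagonal d * V⁻¹) p = V * diagonal (fun k => p.eval (d k)) * V⁻¹ := by
  obtain ⟨u, rfl⟩ := (isUnit_iff_isUnit_det V).mpr hV
  have hdiag : aeval (diagonal d) p = diagonal fun k => p.eval (d k) := by
    have h := aeval_algHom_apply (diagonalAlgHom R : (n → R) →ₐ[R] Matrix n n R) d p
    simpa [aeval_pi_apply] using h
  rw [← coe_units_inv, ← hdiag]
  simpa only [ConjAct.units_smul_def, ConjAct.ofConjAct_toConjAct]
    using aeval_smul p (ConjAct.toConjAct u) (x := diagonal d)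

theorem spectrum_conj_diagonal [Field R] {V : Matrix n n R} (hV : IsUnit V.det) (d : n → R) :
    spectrum R (V * diagonal d * V⁻¹) = Set.range d := by
  obtain ⟨u, rfl⟩ := (isUnit_iff_isUnit_det V).mpr hV
  rw [← coe_units_inv, spectrum.units_conjugate, spectrum_diagonal]

end Diagonalizable

theorem mul_prod_mul_sub_mul {R ι : Type*} [CommRing R] [Fintype ι] {a z : R} {p m s : ι → R}
    (h : a * ∏ j, (z - s j) = ∏ j, (z - m j) + ∏ j, (z - p j)) (c : R) :
    a * ∏ j, (c * z - c * s j) = ∏ j, (c * z - c * m j) + ∏ j, (c * z - c * p j) := by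
  simp only [← mul_sub, Finset.prod_mul_distrib]
  rw [mul_left_comm, h, mul_add]

/-- Practical implementation of OWNS-R: if the shifts `β_*ʲ` satisfy the
polynomial identity `2∏_j(z−β_*ʲ) = ∏_j(z−β₋ʲ) + ∏_j(z−β₊ʲ)` at every eigenvalue `z = α_k`,
and `Z = ∏_j (M − iβ₊ʲI)(M − iβ₋ʲI)⁻¹` with `I + Z` invertible, then
`(I + Z)⁻¹ = (1/2)·∏_j (M − iβ_*ʲI)⁻¹(M − iβ₋ʲI)`. -/
theorem ownsR_practical_implementation
    (N : ℕ) (α : Fin N → ℂ)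
    (D : Matrix (Fin N) (Fin N) ℂ) (hD : D = Matrix.diagonal (fun k => Complex.I * α k))
    (V : Matrix (Fin N) (Fin N) ℂ) (hV : IsUnit V.det)
    (M : Matrix (Fin N) (Fin N) ℂ) (hM : M = V * D * V⁻¹)
    (Nβ : ℕ) (βp βm βs : Fin Nβ → ℂ)
    (hne : ∀ (k : Fin N) (j : Fin Nβ), α k ≠ βm j ∧ α k ≠ βs j)
    (hpoly : ∀ k : Fin N,
      2 * ∏ j : Fin Nβ, (α k - βs j) =
        (∏ j : Fin Nβ, (α k - βm j)) + ∏ j : Fin Nβ, (α k - βp j))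
    (Z : Matrix (Fin N) (Fin N) ℂ)
    (hZ : Z = ((List.finRange Nβ).map (fun j =>
      (M - (Complex.I * βp j) • 1) * (M - (Complex.I * βm j) • 1)⁻¹)).prod)
    (hunit : IsUnit (1 + Z)) :
    (1 + Z)⁻¹ = (2 : ℂ)⁻¹ • ((List.finRange Nβ).map (fun j =>
      (M - (Complex.I * βs j) • 1)⁻¹ * (M - (Complex.I * βm j) • 1))).prod := by
  have hnotMem {b : ℂ} (hb : ∀ k, α k ≠ b) : Complex.I * b ∉ spectrum ℂ M := by
    rw [hM, hD, spectrum_conj_diagonal hV]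
    rintro ⟨k, hk⟩
    exact hb k (mul_left_cancel₀ Complex.I_ne_zero hk)
  simp only [hZ, nonsing_inv_eq_ringInverse, ← invOf_eq_inv (2 : ℂ)]
  refine ownsR_practical_implementation_general Nβ _ _ _
    (fun j => hnotMem fun k => (hne k j).1) (fun j => hnotMem fun k => (hne k j).2) ?_
  simp only [hM, hD, aeval_conj_diagonal hV, eval_mul, eval_add, eval_ofNat, eval_prod, eval_sub,
    eval_X, eval_C, mul_prod_mul_sub_mul (hpoly _)]
end
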